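/- Let $F = (f,g) : \mathbb{C}^2 \to \mathbb{C}^2$ be a polynomial map whose critical curve $C(F)$ is an affine curve of degree $d_1 + d_2 - 2$ (where $\deg f = d_1 \geq d_2 = \deg g$) such that $F$ restricted to $C(F)$ is generically injective, and such that for a generic affine line $L = \{ax+by+c=0\}$, the curve $\{a f + b g + c = 0\}$ (of degree $d_1$) has no common points at infinity with $C(F)$ and meets $C(F)$ transversally in smooth points of $\Delta(F)=F(C(F))$. Then $\deg \Delta(F) = d_1 (d_1 + d_2 - 2)$. -/

import Mathlib

namespace BZ
open MvPolynomial
theorem deriv_formula {A M : Type*} [CommRing A] [Algebra ℂ A] [AddCommGroup M] [Module A M] [Module ℂ M] 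
   (ψ : MvPolynomial (Fin 2) ℂ →ₐ[ℂ] A) (D : Derivation ℂ A M) (R : MvPolynomial (Fin 2) ℂ) :
   D (ψ R) = ψ (pderiv 0 R) • D (ψ (X 0)) + ψ (pderiv 1 R) • D (ψ (X 1)) := by
  induction R using MvPolynomial.induction_on with
  | C a => 
    have : ψ (C a) = algebraMap ℂ A a := ψ.commutes a
    simp [this]
  | add p q hp hq => simp only [map_add, hp, hq, add_smul]; abel
  | mul_X p i hp => 
    simp only [map_mul, Derivation.leibniz, hp, smul_add, smul_smul, smul_eq_mul, map_add, add_smul, pderiv_X]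
    fin_cases i
    · simp [mul_smul]; abel
    · simp [mul_smul]; abel

theorem exists_hom_of_maximal {A : Type*} [CommRing A] [Algebra ℂ A] [Algebra.FiniteType ℂ A]
    (I : Ideal A) (hI : I.IsMaximal) : ∃ χ : A →ₐ[ℂ] ℂ, RingHom.ker χ = I := by
  let _ := Ideal.Quotient.field I
  have : Module.Finite ℂ (A ⧸ I) := finite_of_finite_type_of_isJacobsonRing ℂ (A ⧸ I)
  have hb := IsAlgClosed.algebraMap_bijective_of_isIntegral (k := ℂ) (K := A ⧸ I)
  let e : ℂ ≃ₐ[ℂ] (A ⧸ I) := AlgEquiv.ofBijective (Algebra.ofId ℂ (A ⧸ I)) hb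
  refine ⟨(e.symm : (A ⧸ I) →ₐ[ℂ] ℂ).comp (Ideal.Quotient.mkₐ ℂ I), ?_⟩
  ext x
  simp [RingHom.mem_ker, Ideal.Quotient.eq_zero_iff_mem]

theorem hom_comp_eq_eval {A : Type*} [CommRing A] [Algebra ℂ A]
    (ψ : MvPolynomial (Fin 2) ℂ →ₐ[ℂ] A) (χ : A →ₐ[ℂ] ℂ) (R : MvPolynomial (Fin 2) ℂ) :
    χ (ψ R) = eval (fun i => χ (ψ (X i))) R := by
  have h : χ.comp ψ = aeval (fun i => χ (ψ (X i))) := by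
    apply MvPolynomial.algHom_ext; intro i; simp
  have := DFunLike.congr_fun h R
  simpa [aeval_eq_eval] using this

theorem count_points (P Q : MvPolynomial (Fin 2) ℂ)
    (hd : ∀ q : Fin 2 → ℂ, eval q P = 0 → eval q Q = 0 →
      eval q (pderiv 0 P * pderiv 1 Q - pderiv 1 P * pderiv 0 Q) ≠ 0) :
    Nat.card {q : Fin 2 → ℂ // eval q P = 0 ∧ eval q Q = 0} =
      Module.finrank ℂ (MvPolynomial (Fin 2) ℂ ⧸ Ideal.span {P, Q}) := by
  set I : Ideal (MvPolynomial (Fin 2) ℂ) := Ideal.span {P, Q} with hI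
  let A := MvPolynomial (Fin 2) ℂ ⧸ I
  let ψ : MvPolynomial (Fin 2) ℂ →ₐ[ℂ] A := Ideal.Quotient.mkₐ ℂ I
  have hψs : Function.Surjective ψ := Ideal.Quotient.mkₐ_surjective ℂ I
  have hP : ψ P = 0 := Ideal.Quotient.eq_zero_iff_mem.2 (Ideal.subset_span (by simp))
  have hQ : ψ Q = 0 := Ideal.Quotient.eq_zero_iff_mem.2 (Ideal.subset_span (by simp))
  have hunit : IsUnit (ψ (pderiv 0 P * pderiv 1 Q - pderiv 1 P * pderiv 0 Q)) := by
    by_contra hu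
    obtain ⟨M, hM, hmem⟩ := exists_max_ideal_of_mem_nonunits hu
    obtain ⟨χ, hχ⟩ := exists_hom_of_maximal M hM
    rw [← hχ, RingHom.mem_ker] at hmem
    have e := hom_comp_eq_eval ψ χ
    refine hd _ ?_ ?_ (by rw [← e]; exact hmem)
    · rw [← e, hP, map_zero]
    · rw [← e, hQ, map_zero]
  have hFU : Algebra.FormallyUnramified ℂ A := by
    constructor
    have hD : ∀ x : A, KaehlerDifferential.D ℂ A x = 0 := by
      have h1 := deriv_formula ψ (KaehlerDifferential.D ℂ A) P
      have h2 := deriv_formula ψ (KaehlerDifferential.D ℂ A) Q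
      rw [hP, map_zero] at h1
      rw [hQ, map_zero] at h2
      have hx0 : KaehlerDifferential.D ℂ A (ψ (X 0)) = 0 := by
        rw [← hunit.smul_eq_zero]
        have : ψ (pderiv 1 Q) • (0 : Ω[A⁄ℂ]) - ψ (pderiv 1 P) • (0 : Ω[A⁄ℂ]) = 0 := by simp
        rw [← this]
        nth_rewrite 1 [h1]
        nth_rewrite 1 [h2]
        simp only [map_sub, map_mul]
        module
      have hx1 : KaehlerDifferential.D ℂ A (ψ (X 1)) = 0 := by
        rw [← hunit.smul_eq_zero]
        have : ψ (pderiv 0 P) • (0 : Ω[A⁄ℂ]) - ψ (pderiv 0 Q) • (0 : Ω[A⁄ℂ]) = 0 := by simp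
        rw [← this]
        nth_rewrite 1 [h2]
        nth_rewrite 1 [h1]
        simp only [map_sub, map_mul]
        module
      intro x
      obtain ⟨R, rfl⟩ := hψs x
      rw [deriv_formula ψ, hx0, hx1]; simp
    rw [← Submodule.subsingleton_iff A, ← subsingleton_iff_bot_eq_top,
      ← KaehlerDifferential.span_range_derivation, eq_comm, Submodule.span_eq_bot]
    rintro _ ⟨x, rfl⟩
    exact hD x
  have hFE : Algebra.FormallyEtale ℂ A := Algebra.FormallyEtale.of_formallyUnramified_of_field ℂ A
  have hfin : Module.Finite ℂ A := Algebra.FormallyUnramified.finite_of_free ℂ A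
  have hart : IsArtinianRing A := isArtinian_of_tower ℂ inferInstance
  have : Finite (PrimeSpectrum A) := inferInstance
  have := Fintype.ofFinite (PrimeSpectrum A)
  change _ = Module.finrank ℂ A
  rw [(Algebra.FormallyEtale.equivPiOfIsSepClosed ℂ A).toLinearEquiv.finrank_eq,
    Module.finrank_fintype_fun_eq_card, ← Nat.card_eq_fintype_card]
  have hle : ∀ q : Fin 2 → ℂ, eval q P = 0 ∧ eval q Q = 0 → ∀ a ∈ I, aeval (R := ℂ) q a = 0 := by
    intro q hq a ha
    have : I ≤ RingHom.ker (aeval (R := ℂ) q) := by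
      rw [hI, Ideal.span_le]
      rintro x (rfl | rfl)
      · simp [RingHom.mem_ker, aeval_eq_eval, hq.1]
      · simp [RingHom.mem_ker, aeval_eq_eval, hq.2]
    exact this ha
  let ev : {q : Fin 2 → ℂ // eval q P = 0 ∧ eval q Q = 0} → (A →ₐ[ℂ] ℂ) := fun q =>
    Ideal.Quotient.liftₐ I (aeval (R := ℂ) q.1) (hle q.1 q.2)
  have hev : ∀ q R, ev q (ψ R) = eval q.1 R := by
    intro q R
    have : ev q (ψ R) = aeval (R := ℂ) q.1 R := rfl
    rw [this, aeval_eq_eval]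
  refine Nat.card_eq_of_bijective (fun q => ⟨RingHom.ker (ev q), RingHom.ker_isPrime _⟩) ⟨?_, ?_⟩
  · intro q r hqr
    have hk : RingHom.ker (ev q) = RingHom.ker (ev r) := congrArg PrimeSpectrum.asIdeal hqr
    ext i
    have : ψ (X i - C (q.1 i)) ∈ RingHom.ker (ev r) := by
      rw [← hk, RingHom.mem_ker, hev]; simp
    rw [RingHom.mem_ker, hev] at this
    simp [sub_eq_zero] at this
    exact this.symm
  · intro p
    obtain ⟨χ, hχ⟩ := exists_hom_of_maximal p.asIdeal (Ideal.isMaximal_of_isPrime p.asIdeal)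
    have e := hom_comp_eq_eval ψ χ
    refine ⟨⟨fun i => χ (ψ (X i)), ?_, ?_⟩, ?_⟩
    · rw [← e, hP, map_zero]
    · rw [← e, hQ, map_zero]
    · ext1
      rw [← hχ]
      ext x
      obtain ⟨R, rfl⟩ := hψs x
      simp only [RingHom.mem_ker]
      rw [hev]
      exact (congrArg (· = 0) (e R)).symm.to_iff

end BZ

namespace BZ
open Polynomial Module

theorem finrank_coker {F M ι : Type*} [Field F] [AddCommGroup M] [Module F[X] M] [Module F M]
    [IsScalarTower F F[X] M] [Fintype ι] (b : Basis ι F[X] M) (φ : M →ₗ[F[X]] M)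
    (hφ : LinearMap.det φ ≠ 0) :
    Module.finrank F (M ⧸ LinearMap.range φ) = (LinearMap.det φ).natDegree := by
  classical
  have : Module.Free F[X] M := Module.Free.of_basis b
  have : Module.Finite F[X] M := Module.Finite.of_basis b
  have hinj : Function.Injective φ := by
    rw [← LinearMap.ker_eq_bot]
    by_contra h
    exact hφ (LinearMap.det_eq_zero_iff_ker_ne_bot.2 h)
  let eφ : M ≃ₗ[F[X]] LinearMap.range φ := LinearEquiv.ofInjective φ hinj
  have h : Module.finrank F[X] (LinearMap.range φ) = Module.finrank F[X] M := eφ.finrank_eq.symm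
  have hne := Submodule.smithNormalFormCoeffs_ne_zero b h
  have hfd : ∀ i, Module.Finite F
      (F[X] ⧸ Ideal.span ({Submodule.smithNormalFormCoeffs b h i} : Set F[X])) := fun i =>
    PowerBasis.finite (AdjoinRoot.powerBasis (hne i))
  have hassoc : Associated (∏ i, Submodule.smithNormalFormCoeffs b h i) (LinearMap.det φ) := by
    let b' := Submodule.smithNormalFormTopBasis b h
    rw [← Matrix.det_diagonal, ← LinearMap.det_toLin b']
    let e : M ≃ₗ[F[X]] M :=
      (b'.equiv (Submodule.smithNormalFormBotBasis b h) <| Equiv.refl _).trans eφ.symm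
    refine LinearMap.associated_det_of_eq_comp e _ _ ?_
    have key : Matrix.toLin b' b' (Matrix.diagonal (Submodule.smithNormalFormCoeffs b h)) =
        φ.comp e.toLinearMap := by
      refine b'.ext fun i => ?_
      have h1 : φ (e (b' i)) = (Submodule.smithNormalFormBotBasis b h i : M) := by
        have : eφ (e (b' i)) = Submodule.smithNormalFormBotBasis b h i := by
          simp [e]
        rw [← this]; rfl
      simp only [LinearMap.comp_apply, LinearEquiv.coe_coe, h1,
        Submodule.smithNormalFormBotBasis_def]
      rw [Matrix.toLin_self]
      simp [Matrix.diagonal_apply, b']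
    intro x
    rw [key]; rfl
  rw [← natDegree_eq_of_degree_eq (degree_eq_degree_of_associated hassoc),
    natDegree_prod _ _ fun i _ => hne i, Submodule.finrank_quotient_eq_sum F b h]
  congr with i
  exact (AdjoinRoot.powerBasis (hne i)).finrank

/-- Companion matrix. -/
def compMat {R : Type*} [CommRing R] (m : ℕ) (p : R[X]) : Matrix (Fin m) (Fin m) R :=
  Matrix.of fun i j => if (j : ℕ) + 1 = m then - p.coeff i else if (i : ℕ) = j + 1 then 1 else 0

theorem norm_mk {R : Type*} [CommRing R] [Nontrivial R] (m : ℕ) (p q : R[X]) (hp : p.Monic)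
    (hm : p.natDegree = m) :
    Algebra.norm R (AdjoinRoot.mk p q) = (aeval (compMat m p) q).det := by
  subst hm
  let b := AdjoinRoot.powerBasisAux' hp
  rw [Algebra.norm_eq_matrix_det b]
  have h : Algebra.leftMulMatrix b (AdjoinRoot.root p) = compMat p.natDegree p := by
    ext i j : 1
    have hbj : b j = AdjoinRoot.mk p (X ^ (j : ℕ)) := by
      have := (AdjoinRoot.powerBasis' hp).basis_eq_pow j
      rw [map_pow, AdjoinRoot.mk_X]
      exact this.trans (by rw [AdjoinRoot.powerBasis'_gen])
    have hr : b.repr (AdjoinRoot.mk p (X ^ ((j : ℕ) + 1))) i = ((X ^ ((j : ℕ) + 1) : R[X]) %ₘ p).coeff i := by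
      rw [AdjoinRoot.powerBasisAux'_repr_apply_to_fun, AdjoinRoot.modByMonicHom_mk]
    rw [Algebra.leftMulMatrix_eq_repr_mul, hbj, ← AdjoinRoot.mk_X, ← map_mul, ← pow_succ', hr]
    simp only [compMat, Matrix.of_apply]
    split_ifs with h1 h2
    · have : (X ^ ((j : ℕ) + 1) : R[X]) %ₘ p = X ^ ((j:ℕ)+1) - p := by
        have hs : (X ^ ((j : ℕ) + 1) : R[X]) = (X ^ ((j:ℕ)+1) - p) + p * 1 := by ring
        conv_lhs => rw [hs]
        rw [add_modByMonic, (modByMonic_eq_zero_iff_dvd hp).2 (dvd_mul_right _ _), add_zero,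
          modByMonic_eq_self_iff hp]
        apply degree_sub_lt_right _ hp.ne_zero
        · rw [hp.leadingCoeff, (monic_X_pow _).leadingCoeff]
        · rw [degree_X_pow, degree_eq_natDegree hp.ne_zero, h1]
      rw [this, coeff_sub, coeff_X_pow, if_neg (by omega), zero_sub]
    · rw [(modByMonic_eq_self_iff hp).2, h2, coeff_X_pow_self]
      rw [degree_X_pow, degree_eq_natDegree hp.ne_zero]; exact_mod_cast by omega
    · rw [(modByMonic_eq_self_iff hp).2, coeff_X_pow, if_neg h2]
      rw [degree_X_pow, degree_eq_natDegree hp.ne_zero]; exact_mod_cast by omega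
  have h2 : AdjoinRoot.mk p q = aeval (AdjoinRoot.root p) q := (AdjoinRoot.aeval_eq q).symm
  rw [h2, ← h, ← aeval_algHom_apply]

/-- weight -/
def Wt {m : ℕ} (k : ℕ) (M : Matrix (Fin m) (Fin m) ℂ[X]) (L : Matrix (Fin m) (Fin m) ℂ) : Prop :=
  ∀ i j : Fin m, (X ^ (i : ℕ) * M i j).natDegree ≤ k + j ∧ (X ^ (i : ℕ) * M i j).coeff (k + j) = L i j

theorem Wt.add {m k : ℕ} {M N : Matrix (Fin m) (Fin m) ℂ[X]} {L K : Matrix (Fin m) (Fin m) ℂ}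
    (h1 : Wt k M L) (h2 : Wt k N K) : Wt k (M + N) (L + K) := by
  intro i j
  simp only [Matrix.add_apply, mul_add, coeff_add, (h1 i j).2, (h2 i j).2, and_true]
  exact natDegree_add_le_of_degree_le (h1 i j).1 (h2 i j).1

theorem Wt.zero {m k : ℕ} : Wt k (0 : Matrix (Fin m) (Fin m) ℂ[X]) 0 := by
  intro i j; simp

theorem Wt.one {m : ℕ} : Wt 0 (1 : Matrix (Fin m) (Fin m) ℂ[X]) 1 := by
  intro i j
  by_cases h : i = j
  · subst h; simp
  · simp [h]

theorem Wt.smul {m k e : ℕ} {M : Matrix (Fin m) (Fin m) ℂ[X]} {L : Matrix (Fin m) (Fin m) ℂ}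
    (h1 : Wt k M L) (c : ℂ[X]) (hc : c.natDegree ≤ e) : Wt (e + k) (c • M) (c.coeff e • L) := by
  intro i j
  have : X ^ (i : ℕ) * (c • M) i j = c * (X ^ (i : ℕ) * M i j) := by
    simp [Matrix.smul_apply]; ring
  rw [this, add_assoc]
  refine ⟨natDegree_mul_le_of_le hc (h1 i j).1, ?_⟩
  rw [coeff_mul_add_eq_of_natDegree_le hc (h1 i j).1, (h1 i j).2]; simp

theorem Wt.mul {m k l : ℕ} {M N : Matrix (Fin m) (Fin m) ℂ[X]} {L K : Matrix (Fin m) (Fin m) ℂ}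
    (h1 : Wt k M L) (h2 : Wt l N K) : Wt (k + l) (M * N) (L * K) := by
  intro i j
  have hs : ∀ s : Fin m, X ^ (s:ℕ) * (X ^ (i : ℕ) * (M i s * N s j)) =
      (X ^ (i : ℕ) * M i s) * (X ^ (s : ℕ) * N s j) := by intro s; ring
  rw [Matrix.mul_apply, Finset.mul_sum]
  constructor
  · refine natDegree_sum_le_of_forall_le _ _ fun s _ => ?_
    rw [natDegree_le_iff_coeff_eq_zero]
    intro t ht
    rw [← coeff_X_pow_mul _ (s : ℕ), hs]
    apply coeff_eq_zero_of_natDegree_lt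
    have := natDegree_mul_le_of_le (h1 i s).1 (h2 s j).1
    omega
  · rw [finsetSum_coeff, Matrix.mul_apply]
    refine Finset.sum_congr rfl fun s _ => ?_
    rw [← coeff_X_pow_mul _ (s : ℕ), hs, show k + l + (j:ℕ) + s = (k + s) + (l + j) by ring,
      coeff_mul_add_eq_of_natDegree_le (h1 i s).1 (h2 s j).1, (h1 i s).2, (h2 s j).2]

theorem Wt.pow {m k : ℕ} {M : Matrix (Fin m) (Fin m) ℂ[X]} {L : Matrix (Fin m) (Fin m) ℂ}
    (h1 : Wt k M L) (n : ℕ) : Wt (n * k) (M ^ n) (L ^ n) := by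
  induction n with
  | zero => simpa using Wt.one
  | succ n ih => rw [pow_succ, pow_succ, add_mul, one_mul]; exact ih.mul h1

theorem coeff_prod_le {ι : Type*} (s : Finset ι) (f : ι → ℂ[X]) (d : ι → ℕ)
    (h : ∀ i ∈ s, (f i).natDegree ≤ d i) :
    (∏ i ∈ s, f i).natDegree ≤ ∑ i ∈ s, d i ∧
    (∏ i ∈ s, f i).coeff (∑ i ∈ s, d i) = ∏ i ∈ s, (f i).coeff (d i) := by
  classical
  induction s using Finset.induction_on with
  | empty => simp
  | insert a s ha ih =>
    have ih := ih fun i hi => h i (Finset.mem_insert_of_mem hi)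
    have h0 := h a (Finset.mem_insert_self _ _)
    rw [Finset.prod_insert ha, Finset.sum_insert ha, Finset.prod_insert ha]
    exact ⟨natDegree_mul_le_of_le h0 ih.1, by rw [coeff_mul_add_eq_of_natDegree_le h0 ih.1, ih.2]⟩

theorem det_le {m : ℕ} (N : Matrix (Fin m) (Fin m) ℂ[X]) (L : Matrix (Fin m) (Fin m) ℂ)
    (d : Fin m → ℕ) (h : ∀ i j, (N i j).natDegree ≤ d j ∧ (N i j).coeff (d j) = L i j) :
    N.det.natDegree ≤ ∑ j, d j ∧ N.det.coeff (∑ j, d j) = L.det := by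
  simp only [Matrix.det_apply]
  constructor
  · refine natDegree_sum_le_of_forall_le _ _ fun σ _ => ?_
    refine (natDegree_smul_le _ _).trans ?_
    exact (coeff_prod_le _ _ _ fun i _ => (h _ i).1).1
  · rw [finsetSum_coeff]
    refine Finset.sum_congr rfl fun σ _ => ?_
    rw [coeff_smul, (coeff_prod_le _ _ _ fun i _ => (h _ i).1).2]
    simp only [(h _ _).2]

theorem Wt.det {m k : ℕ} {M : Matrix (Fin m) (Fin m) ℂ[X]} {L : Matrix (Fin m) (Fin m) ℂ}
    (h : Wt k M L) (hL : L.det ≠ 0) : M.det ≠ 0 ∧ M.det.natDegree = m * k := by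
  have h1 := det_le (Matrix.of fun i j : Fin m => X ^ (i : ℕ) * M i j) L (fun j : Fin m => k + (j : ℕ))
    (fun i j => by rw [Matrix.of_apply]; exact h i j)
  have h2 : (Matrix.of fun i j : Fin m => X ^ (i : ℕ) * M i j).det =
      (X : ℂ[X]) ^ (∑ i : Fin m, (i : ℕ)) * M.det := by
    rw [Matrix.det_mul_column, Finset.prod_pow_eq_pow_sum]
  rw [h2, Finset.sum_add_distrib, Finset.sum_const, Finset.card_univ, Fintype.card_fin,
    smul_eq_mul, coeff_X_pow_mul] at h1
  have h0 : M.det ≠ 0 := by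
    intro h0; rw [h0, coeff_zero] at h1; exact hL h1.2.symm
  refine ⟨h0, le_antisymm ?_ (le_natDegree_of_ne_zero (by rw [h1.2]; exact hL))⟩
  have := h1.1
  rw [natDegree_X_pow_mul _ h0] at this
  omega

theorem Wt.comp {m : ℕ} (p : ℂ[X][X]) (t : ℂ[X])
    (hp : ∀ i j, m ≤ i + j → (p.coeff i).coeff j = if i + j = m then t.coeff i else 0) :
    Wt 1 (compMat m p) (compMat m t) := by
  intro i j
  simp only [compMat, Matrix.of_apply]
  split_ifs with h1 h2
  · constructor
    · rw [natDegree_le_iff_coeff_eq_zero]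
      intro N hN
      obtain ⟨e, rfl⟩ : ∃ e, N = e + i := ⟨N - i, by omega⟩
      rw [coeff_X_pow_mul, coeff_neg, hp _ _ (by omega), if_neg (by omega), neg_zero]
    · obtain ⟨e, he⟩ : ∃ e, 1 + (j:ℕ) = e + i := ⟨1 + j - i, by omega⟩
      rw [he, coeff_X_pow_mul, coeff_neg, hp _ _ (by omega), if_pos (by omega)]
  · simp [h2, add_comm, coeff_X_pow]
  · simp

theorem Wt.aeval {m n : ℕ} (K : Matrix (Fin m) (Fin m) ℂ[X]) (L : Matrix (Fin m) (Fin m) ℂ)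
    (h : Wt 1 K L) (q : ℂ[X][X]) (t : ℂ[X]) (ht : t.natDegree ≤ n)
    (hq : ∀ i j, n ≤ i + j → (q.coeff i).coeff j = if i + j = n then t.coeff i else 0) :
    Wt n (aeval K q) (aeval L t) := by
  have hqn : q.natDegree ≤ n := by
    rw [natDegree_le_iff_coeff_eq_zero]
    intro i hi
    ext j
    rw [hq _ _ (by omega), if_neg (by omega), coeff_zero]
  rw [aeval_eq_sum_range' (Nat.lt_succ_of_le hqn), aeval_eq_sum_range' (Nat.lt_succ_of_le ht)]
  have hsum : ∀ s : Finset ℕ, s ⊆ Finset.range n.succ →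
      Wt n (∑ i ∈ s, q.coeff i • K ^ i) (∑ i ∈ s, t.coeff i • L ^ i) := by
    intro s
    induction s using Finset.induction_on with
    | empty => intro _; simpa using Wt.zero
    | insert a s ha ih =>
      intro hs
      have han : a ≤ n := by
        have := hs (Finset.mem_insert_self a s); simp at this; omega
      rw [Finset.sum_insert ha, Finset.sum_insert ha]
      refine Wt.add ?_ (ih fun x hx => hs (Finset.mem_insert_of_mem hx))
      have h1 := (h.pow a).smul (e := n - a) (q.coeff a) (by
        rw [natDegree_le_iff_coeff_eq_zero]
        intro j hj
        rw [hq _ _ (by omega), if_neg (by omega)])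
      rw [hq _ _ (by omega), if_pos (by omega), mul_one, Nat.sub_add_cancel han] at h1
      exact h1
  exact hsum _ subset_rfl

theorem finrank_adjoin {m n : ℕ} (p q : ℂ[X][X]) (pt qt : ℂ[X]) (hm : p.natDegree = m)
    (hpm : p.Monic) (hptm : pt.Monic) (hptd : pt.natDegree = m)
    (hqt : qt.natDegree ≤ n)
    (hp : ∀ i j, m ≤ i + j → (p.coeff i).coeff j = if i + j = m then pt.coeff i else 0)
    (hq : ∀ i j, n ≤ i + j → (q.coeff i).coeff j = if i + j = n then qt.coeff i else 0)
    (hcop : IsCoprime pt qt) :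
    Module.finrank ℂ (AdjoinRoot p ⧸ Ideal.span {AdjoinRoot.mk p q}) = m * n := by
  have hL : (Polynomial.aeval (compMat m pt) qt).det ≠ 0 := by
    rw [← norm_mk m pt qt hptm hptd]
    apply IsUnit.ne_zero
    apply IsUnit.map
    obtain ⟨u, v, huv⟩ := hcop
    refine IsUnit.of_mul_eq_one (AdjoinRoot.mk pt v) ?_
    rw [← map_mul, mul_comm, ← map_one (AdjoinRoot.mk pt), ← huv, map_add]
    simp
  have hW := (Wt.aeval _ _ (Wt.comp p pt hp) q qt hqt hq).det hL
  rw [← norm_mk m p q hpm hm] at hW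
  have key := finrank_coker (F := ℂ) (AdjoinRoot.powerBasisAux' hpm)
    (Algebra.lmul ℂ[X] (AdjoinRoot p) (AdjoinRoot.mk p q)) hW.1
  have hr : LinearMap.range (Algebra.lmul ℂ[X] (AdjoinRoot p) (AdjoinRoot.mk p q)) =
      (Ideal.span {AdjoinRoot.mk p q}).restrictScalars ℂ[X] := by
    ext x
    simp [Ideal.mem_span_singleton, dvd_def]
  rw [hr] at key
  rw [← hW.2]
  exact key

end BZ

namespace BZ
open Polynomial

/-- shear -/
noncomputable def Ph (α : ℂ) : MvPolynomial (Fin 2) ℂ →ₐ[ℂ] ℂ[X][X] :=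
  MvPolynomial.aeval ![C X + C (C α) * X, X]

noncomputable def Ps (α : ℂ) : ℂ[X][X] →+* MvPolynomial (Fin 2) ℂ :=
  eval₂RingHom (aeval (R := ℂ) (MvPolynomial.X 0 - MvPolynomial.C α * MvPolynomial.X 1 :
    MvPolynomial (Fin 2) ℂ)).toRingHom (MvPolynomial.X 1)

theorem Ps_Ph (α : ℂ) (R : MvPolynomial (Fin 2) ℂ) : Ps α (Ph α R) = R := by
  have : (Ps α).comp (Ph α).toRingHom = RingHom.id _ := by
    apply MvPolynomial.ringHom_ext
    · intro r
      simp [Ph, Ps, Polynomial.algebraMap_apply]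
    · intro i
      fin_cases i <;> simp [Ph, Ps]
  exact congrArg (fun φ : MvPolynomial (Fin 2) ℂ →+* MvPolynomial (Fin 2) ℂ => φ R) this

theorem Ph_Ps (α : ℂ) (r : ℂ[X][X]) : Ph α (Ps α r) = r := by
  have : (Ph α).toRingHom.comp (Ps α) = RingHom.id _ := by
    apply Polynomial.ringHom_ext'
    · apply Polynomial.ringHom_ext
      · intro a
        simp [Ph, Ps, Polynomial.algebraMap_apply]
      · simp [Ph, Ps, Polynomial.algebraMap_apply]
    · simp [Ph, Ps]
  exact congrArg (fun φ : ℂ[X][X] →+* ℂ[X][X] => φ r) this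

theorem finrank_transfer (α : ℂ) (P Q : MvPolynomial (Fin 2) ℂ) :
    Module.finrank ℂ (MvPolynomial (Fin 2) ℂ ⧸ Ideal.span {P, Q}) =
    Module.finrank ℂ (AdjoinRoot (Ph α P) ⧸ Ideal.span {AdjoinRoot.mk (Ph α P) (Ph α Q)}) := by
  let κ0 : MvPolynomial (Fin 2) ℂ →+* (AdjoinRoot (Ph α P) ⧸ Ideal.span {AdjoinRoot.mk (Ph α P) (Ph α Q)}) :=
    (Ideal.Quotient.mk _).comp ((AdjoinRoot.mk (Ph α P)).comp (Ph α).toRingHom)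
  have hk : ∀ R, κ0 R = Ideal.Quotient.mk _ (AdjoinRoot.mk (Ph α P) (Ph α R)) := fun R => rfl
  let κ : MvPolynomial (Fin 2) ℂ →ₐ[ℂ] (AdjoinRoot (Ph α P) ⧸ Ideal.span {AdjoinRoot.mk (Ph α P) (Ph α Q)}) :=
    { κ0 with
      commutes' := by
        intro r
        show κ0 _ = _
        rw [hk, AlgHom.commutes]
        rfl }
  have hκ : ∀ R, κ R = Ideal.Quotient.mk _ (AdjoinRoot.mk (Ph α P) (Ph α R)) := fun R => rfl
  have hs : Function.Surjective κ := by
    intro z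
    obtain ⟨y, rfl⟩ := Ideal.Quotient.mk_surjective z
    obtain ⟨x, rfl⟩ := AdjoinRoot.mk_surjective y
    exact ⟨Ps α x, by rw [hκ, Ph_Ps]⟩
  have hker : RingHom.ker κ = Ideal.span {P, Q} := by
    ext R
    rw [RingHom.mem_ker, hκ, Ideal.Quotient.eq_zero_iff_mem, Ideal.mem_span_singleton',
      Ideal.mem_span_pair]
    constructor
    · rintro ⟨y, hy⟩
      obtain ⟨c, rfl⟩ := AdjoinRoot.mk_surjective y
      rw [← map_mul, eq_comm, ← sub_eq_zero, ← map_sub, AdjoinRoot.mk_eq_zero] at hy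
      obtain ⟨d, hd⟩ := hy
      refine ⟨Ps α d, Ps α c, ?_⟩
      have := congrArg (Ps α) hd
      simp only [map_sub, map_mul, Ps_Ph] at this
      linear_combination -this
    · rintro ⟨u, v, rfl⟩
      refine ⟨AdjoinRoot.mk _ (Ph α v), ?_⟩
      simp
  rw [← hker]
  exact (Ideal.quotientKerAlgEquivOfSurjective hs).toLinearEquiv.finrank_eq

/-- bihomogeneous -/
def E (k : ℕ) (r : ℂ[X][X]) : Prop := ∀ i j, i + j ≠ k → (r.coeff i).coeff j = 0

theorem E.add {k : ℕ} {r s : ℂ[X][X]} (h : E k r) (h2 : E k s) : E k (r + s) := by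
  intro i j hij; simp [h i j hij, h2 i j hij]

theorem E.zero {k : ℕ} : E k 0 := by intro i j hij; simp

theorem E.mul {k l : ℕ} {r s : ℂ[X][X]} (h : E k r) (h2 : E l s) : E (k + l) (r * s) := by
  intro i j hij
  rw [coeff_mul, finsetSum_coeff]
  refine Finset.sum_eq_zero fun x hx => ?_
  rw [coeff_mul]
  refine Finset.sum_eq_zero fun y hy => ?_
  rw [Finset.HasAntidiagonal.mem_antidiagonal] at hx hy
  by_cases h3 : x.1 + y.1 = k
  · rw [h2 x.2 y.2 (by omega), mul_zero]
  · rw [h _ _ h3, zero_mul]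

theorem E.cc (a : ℂ) : E 0 (C (C a)) := by
  intro i j hij
  rw [coeff_C]
  split_ifs with h
  · rw [coeff_C, if_neg (by omega)]
  · simp

theorem E.X : E 1 (X : ℂ[X][X]) := by
  intro i j hij
  rw [coeff_X]
  split_ifs with h
  · rw [coeff_one, if_neg (by omega)]
  · simp

theorem E.CX : E 1 (C Polynomial.X : ℂ[X][X]) := by
  intro i j hij
  rw [coeff_C]
  split_ifs with h
  · rw [coeff_X, if_neg (by omega)]
  · simp

theorem E.pow {k : ℕ} {r : ℂ[X][X]} (h : E k r) (n : ℕ) : E (n * k) (r ^ n) := by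
  induction n with
  | zero => simpa using E.cc 1
  | succ n ih => rw [pow_succ, add_mul, one_mul]; exact ih.mul h

theorem E.sum {ι : Type*} {k : ℕ} (s : Finset ι) (r : ι → ℂ[X][X]) (h : ∀ i ∈ s, E k (r i)) :
    E k (∑ i ∈ s, r i) := by
  classical
  induction s using Finset.induction_on with
  | empty => simpa using E.zero
  | insert a s ha ih =>
    rw [Finset.sum_insert ha]
    exact (h a (Finset.mem_insert_self _ _)).add (ih fun i hi => h i (Finset.mem_insert_of_mem hi))

theorem E_Ph (α : ℂ) {k : ℕ} {S : MvPolynomial (Fin 2) ℂ} (h : S.IsHomogeneous k) : E k (Ph α S) := by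
  rw [Ph, MvPolynomial.aeval_def, MvPolynomial.eval₂_eq']
  refine E.sum _ _ fun d hd => ?_
  have hk : d 0 + d 1 = k := by
    by_contra hne
    rw [MvPolynomial.mem_support_iff] at hd
    apply hd
    apply h.coeff_eq_zero
    rw [Finsupp.degree_eq_sum]
    simpa using hne
  rw [Fin.prod_univ_two]
  have h1 : E 1 (C Polynomial.X + C (C α) * Polynomial.X : ℂ[X][X]) := by
    refine E.CX.add ?_
    simpa using (E.cc α).mul E.X
  have h2 := (E.cc (S.coeff d)).mul ((h1.pow (d 0)).mul (E.X.pow (d 1)))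
  rw [show 0 + (d 0 * 1 + d 1 * 1) = k by omega] at h2
  exact h2

/-- dehomogenisation -/
noncomputable def ta (α : ℂ) (S : MvPolynomial (Fin 2) ℂ) : ℂ[X] := (Ph α S).map (evalRingHom 1)

theorem ta_coeff (α : ℂ) {k : ℕ} {S : MvPolynomial (Fin 2) ℂ} (h : S.IsHomogeneous k) (i j : ℕ)
    (hij : i + j = k) : (ta α S).coeff i = ((Ph α S).coeff i).coeff j := by
  rw [ta, coeff_map, coe_evalRingHom, eval_eq_sum, sum_def]
  simp only [one_pow, mul_one]
  rw [Finset.sum_eq_single j]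
  · intro b _ hb
    exact E_Ph α h i b (by omega)
  · intro hb; simpa using hb

theorem ta_natDegree (α : ℂ) {k : ℕ} {S : MvPolynomial (Fin 2) ℂ} (h : S.IsHomogeneous k) :
    (ta α S).natDegree ≤ k := by
  rw [natDegree_le_iff_coeff_eq_zero]
  intro N hN
  rw [ta, coeff_map, show (Ph α S).coeff N = 0 from ?_, map_zero]
  ext j
  rw [E_Ph α h N j (by omega), coeff_zero]

theorem Ph_coeff (α : ℂ) {k : ℕ} {R : MvPolynomial (Fin 2) ℂ} (h : R.totalDegree ≤ k) (i j : ℕ)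
    (hij : k ≤ i + j) : ((Ph α R).coeff i).coeff j =
      if i + j = k then (ta α (MvPolynomial.homogeneousComponent k R)).coeff i else 0 := by
  conv_lhs => rw [← MvPolynomial.sum_homogeneousComponent R]
  rw [map_sum, finsetSum_coeff, finsetSum_coeff]
  have hh := fun l => MvPolynomial.homogeneousComponent_isHomogeneous l R
  split_ifs with hk
  · rw [ta_coeff α (hh k) i j hk]
    rw [Finset.sum_eq_single k]
    · intro b _ hb
      exact E_Ph α (hh b) i j (by omega)
    · intro hb
      rw [MvPolynomial.homogeneousComponent_eq_zero]
      · simp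
      · simpa [Nat.lt_succ_iff] using hb
  · refine Finset.sum_eq_zero fun b hb => E_Ph α (hh b) i j ?_
    rw [Finset.mem_range] at hb
    omega

theorem Ph_eval (α x y : ℂ) (S : MvPolynomial (Fin 2) ℂ) :
    ((Ph α S).map (evalRingHom x)).eval y = MvPolynomial.eval ![x + α * y, y] S := by
  have : ((evalRingHom y).comp (mapRingHom (evalRingHom x))).comp (Ph α).toRingHom =
      MvPolynomial.eval ![x + α * y, y] := by
    apply MvPolynomial.ringHom_ext
    · intro r
      simp [Ph, Polynomial.algebraMap_apply]
    · intro i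
      fin_cases i <;> simp [Ph]
  exact congrArg (fun φ : MvPolynomial (Fin 2) ℂ →+* ℂ => φ S) this

theorem ta_eval (α y : ℂ) (S : MvPolynomial (Fin 2) ℂ) :
    (ta α S).eval y = MvPolynomial.eval ![1 + α * y, y] S := Ph_eval α 1 y S

theorem ta_top (α : ℂ) {k : ℕ} {S : MvPolynomial (Fin 2) ℂ} (h : S.IsHomogeneous k) :
    (ta α S).coeff k = MvPolynomial.eval ![α, 1] S := by
  have h1 := Ph_eval α 0 1 S
  rw [zero_add, mul_one] at h1
  rw [← h1, ta_coeff α h k 0 (by omega)]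
  have h2 : (Ph α S).map (evalRingHom 0) = Polynomial.C (((Ph α S).coeff k).coeff 0) * X ^ k := by
    ext i
    rw [coeff_map, coe_evalRingHom, ← coeff_zero_eq_eval_zero, coeff_C_mul, coeff_X_pow]
    split_ifs with hi
    · rw [hi, mul_one]
    · rw [E_Ph α h i 0 (by omega), mul_zero]
  rw [h2]; simp

end BZ

namespace BZ
open Polynomial

theorem monic_aux {m : ℕ} (p : ℂ[X][X]) (pt : ℂ[X]) (h1 : pt.coeff m = 1)
    (hp : ∀ i j, m ≤ i + j → (p.coeff i).coeff j = if i + j = m then pt.coeff i else 0) :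
    p.natDegree = m ∧ p.Monic := by
  have hle : p.natDegree ≤ m := by
    rw [natDegree_le_iff_coeff_eq_zero]
    intro N hN
    ext j
    rw [hp N j (by omega), if_neg (by omega), coeff_zero]
  have hc : p.coeff m = 1 := by
    ext j
    rw [hp m j (by omega), coeff_one]
    by_cases hj : j = 0
    · simp [hj, h1]
    · rw [if_neg (by omega), if_neg hj]
  exact ⟨natDegree_eq_of_le_of_coeff_ne_zero hle (by rw [hc]; exact one_ne_zero),
    monic_of_natDegree_le_of_coeff_eq_one m hle hc⟩

theorem finrank_aux {m n : ℕ} (α : ℂ) (P Q : MvPolynomial (Fin 2) ℂ)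
    (hP : P.totalDegree ≤ m) (hQ : Q.totalDegree ≤ n)
    (h1 : MvPolynomial.eval ![α, 1] (MvPolynomial.homogeneousComponent m P) = 1)
    (hinf : ∀ v : Fin 2 → ℂ, v ≠ 0 →
      ¬ (MvPolynomial.eval v (MvPolynomial.homogeneousComponent m P) = 0 ∧
         MvPolynomial.eval v (MvPolynomial.homogeneousComponent n Q) = 0)) :
    Module.finrank ℂ (MvPolynomial (Fin 2) ℂ ⧸ Ideal.span {P, Q}) = m * n := by
  have hPh := MvPolynomial.homogeneousComponent_isHomogeneous m P
  have hQh := MvPolynomial.homogeneousComponent_isHomogeneous n Q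
  have ht : (ta α (MvPolynomial.homogeneousComponent m P)).coeff m = 1 := by
    rw [ta_top α hPh, h1]
  obtain ⟨hd, hm⟩ := monic_aux (Ph α P) _ ht (Ph_coeff α hP)
  rw [finrank_transfer α]
  refine finrank_adjoin (Ph α P) (Ph α Q) (ta α (MvPolynomial.homogeneousComponent m P))
    (ta α (MvPolynomial.homogeneousComponent n Q)) hd hm
    (monic_of_natDegree_le_of_coeff_eq_one m (ta_natDegree α hPh) ht)
    (natDegree_eq_of_le_of_coeff_ne_zero (ta_natDegree α hPh) (by rw [ht]; exact one_ne_zero))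
    (ta_natDegree α hQh) (Ph_coeff α hP) (Ph_coeff α hQ) ?_
  rw [Polynomial.isCoprime_iff_aeval_ne_zero_of_isAlgClosed ℂ ℂ]
  intro y
  simp only [coe_aeval_eq_eval, ta_eval]
  by_contra hcon
  push Not at hcon
  refine hinf ![1 + α * y, y] ?_ hcon
  intro hv
  have h00 := congrFun hv 0
  have h01 := congrFun hv 1
  simp at h00 h01
  rw [h01] at h00
  simp at h00

theorem eval_scale {k : ℕ} {S : MvPolynomial (Fin 2) ℂ} (h : S.IsHomogeneous k) (c : ℂ)
    (v : Fin 2 → ℂ) : MvPolynomial.eval (c • v) S = c ^ k * MvPolynomial.eval v S := by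
  rw [MvPolynomial.eval_eq', MvPolynomial.eval_eq', Finset.mul_sum]
  refine Finset.sum_congr rfl fun d hd => ?_
  have hk : d 0 + d 1 = k := by
    by_contra hne
    rw [MvPolynomial.mem_support_iff] at hd
    apply hd
    apply h.coeff_eq_zero
    rw [Finsupp.degree_eq_sum]
    simpa using hne
  simp only [Fin.prod_univ_two, Pi.smul_apply, smul_eq_mul, ← hk, pow_add, mul_pow]
  ring

theorem exists_alpha {k : ℕ} {S : MvPolynomial (Fin 2) ℂ} (h : S.IsHomogeneous k) (h0 : S ≠ 0) :
    ∃ α : ℂ, MvPolynomial.eval ![α, 1] S ≠ 0 := by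
  by_contra hcon
  push Not at hcon
  have : S * MvPolynomial.X 1 = 0 := by
    apply MvPolynomial.funext
    intro v
    rw [map_mul, MvPolynomial.eval_X, map_zero]
    by_cases hv : v 1 = 0
    · rw [hv, mul_zero]
    · have h1 : v = v 1 • ![v 0 / v 1, 1] := by
        ext i
        fin_cases i
        · simp; field_simp
        · simp
      rw [h1, eval_scale h, hcon]; simp
  rcases mul_eq_zero.1 this with h1 | h1
  · exact h0 h1
  · exact MvPolynomial.X_ne_zero _ h1

theorem exists_zero {k : ℕ} (hk : 1 ≤ k) {S : MvPolynomial (Fin 2) ℂ} (h : S.IsHomogeneous k) :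
    ∃ v : Fin 2 → ℂ, v ≠ 0 ∧ MvPolynomial.eval v S = 0 := by
  by_cases h0 : MvPolynomial.eval ![0, 1] S = 0
  · exact ⟨_, fun hv => by simpa using congrFun hv 1, h0⟩
  · have h1 := ta_top 0 h
    have h2 : (ta 0 S).degree ≠ 0 := by
      intro hd
      have : (ta 0 S).natDegree = 0 := natDegree_eq_of_degree_eq_some hd
      apply h0
      rw [← h1]
      apply coeff_eq_zero_of_natDegree_lt
      omega
    obtain ⟨y, hy⟩ := IsAlgClosed.exists_root _ h2
    rw [IsRoot, ta_eval] at hy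
    exact ⟨_, fun hv => by simpa using congrFun hv 0, hy⟩

theorem bezout {m n : ℕ} (P Q : MvPolynomial (Fin 2) ℂ)
    (hP : P.totalDegree ≤ m) (hQ : Q.totalDegree ≤ n)
    (h0 : MvPolynomial.homogeneousComponent m P ≠ 0)
    (hinf : ∀ v : Fin 2 → ℂ, v ≠ 0 →
      ¬ (MvPolynomial.eval v (MvPolynomial.homogeneousComponent m P) = 0 ∧
         MvPolynomial.eval v (MvPolynomial.homogeneousComponent n Q) = 0))
    (hd : ∀ q, MvPolynomial.eval q P = 0 → MvPolynomial.eval q Q = 0 →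
      MvPolynomial.eval q (MvPolynomial.pderiv 0 P * MvPolynomial.pderiv 1 Q -
        MvPolynomial.pderiv 1 P * MvPolynomial.pderiv 0 Q) ≠ 0) :
    Nat.card {q : Fin 2 → ℂ // MvPolynomial.eval q P = 0 ∧ MvPolynomial.eval q Q = 0} = m * n := by
  obtain ⟨α, hα⟩ := exists_alpha (MvPolynomial.homogeneousComponent_isHomogeneous m P) h0
  rw [count_points P Q hd]
  set c := MvPolynomial.eval ![α, 1] (MvPolynomial.homogeneousComponent m P) with hc
  have hspan : Ideal.span {P, Q} = Ideal.span {MvPolynomial.C c⁻¹ * P, Q} := by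
    have hu : (MvPolynomial.C c * MvPolynomial.C c⁻¹ : MvPolynomial (Fin 2) ℂ) = 1 := by
      rw [← map_mul, mul_inv_cancel₀ hα, map_one]
    apply le_antisymm <;> rw [Ideal.span_le] <;> rintro x (rfl | rfl)
    · exact Ideal.mem_span_pair.2 ⟨MvPolynomial.C c, 0, by linear_combination x * hu⟩
    · exact Ideal.mem_span_pair.2 ⟨0, 1, by ring⟩
    · exact Ideal.mem_span_pair.2 ⟨MvPolynomial.C c⁻¹, 0, by ring⟩
    · exact Ideal.mem_span_pair.2 ⟨0, 1, by ring⟩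
  rw [hspan]
  have hh : MvPolynomial.homogeneousComponent m (MvPolynomial.C c⁻¹ * P) =
      MvPolynomial.C c⁻¹ * MvPolynomial.homogeneousComponent m P := by
    rw [← MvPolynomial.smul_eq_C_mul, ← MvPolynomial.smul_eq_C_mul, map_smul]
  refine finrank_aux α _ _ ?_ hQ ?_ ?_
  · rw [← MvPolynomial.smul_eq_C_mul]
    exact (MvPolynomial.totalDegree_smul_le _ _).trans hP
  · rw [hh, map_mul, MvPolynomial.eval_C, ← hc, inv_mul_cancel₀ hα]
  · intro v hv hcon
    refine hinf v hv ⟨?_, hcon.2⟩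
    have := hcon.1
    rw [hh, map_mul, MvPolynomial.eval_C, mul_eq_zero] at this
    exact this.resolve_left (inv_ne_zero hα)

end BZ

open MvPolynomial

/-- Degree of the discriminant: if the critical curve `C(F) = {J = 0}` has degree
`d₁ + d₂ - 2`, `F` is generically injective on `C(F)`, and a generic line
`L = {ax + by + c = 0}` pulls back to the curve `{af + bg + c = 0}` (of degree
`d₁`) having no common points at infinity with `C(F)` and meeting it
transversally, with `F` injective on the intersection, then
`deg Δ(F) = #(L ∩ Δ(F)) = d₁(d₁ + d₂ - 2)`. -/
theorem degree_of_discriminant (d1 d2 : ℕ) (h21 : 1 ≤ d2) (hle : d2 ≤ d1)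
    (f g : MvPolynomial (Fin 2) ℂ)
    (hf : f.totalDegree = d1) (hg : g.totalDegree = d2)
    (J : MvPolynomial (Fin 2) ℂ)
    (hJ : J = pderiv 0 f * pderiv 1 g - pderiv 1 f * pderiv 0 g)
    (hdegJ : J.totalDegree = d1 + d2 - 2)
    (C : Set (Fin 2 → ℂ)) (hC : C = {q | eval q J = 0})
    (F : (Fin 2 → ℂ) → (Fin 2 → ℂ)) (hF : ∀ q, F q = ![eval q f, eval q g])
    -- F restricted to C(F) is generically injective:
    (hgeninj : ∃ T : Set (Fin 2 → ℂ), T.Finite ∧ Set.InjOn F (C \ T))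
    (a b c : ℂ) (hab : (a, b) ≠ (0, 0))
    (P : MvPolynomial (Fin 2) ℂ) (hP : P = MvPolynomial.C a * f + MvPolynomial.C b * g + MvPolynomial.C c)
    -- {af + bg + c = 0} and C(F) have no common points at infinity:
    (hinf : ∀ v : Fin 2 → ℂ, v ≠ 0 →
      ¬ (eval v (homogeneousComponent d1 P) = 0 ∧
         eval v (homogeneousComponent (d1 + d2 - 2) J) = 0))
    -- {af + bg + c = 0} meets C(F) transversally:
    (htrans : ∀ q : Fin 2 → ℂ, eval q P = 0 → eval q J = 0 →
      LinearIndependent ℂ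
        ![(fun i => eval q (pderiv i P) : Fin 2 → ℂ),
          (fun i => eval q (pderiv i J) : Fin 2 → ℂ)])
    -- the intersection points map bijectively onto L ∩ Δ(F):
    (hinj : Set.InjOn F (C ∩ {q | eval q P = 0})) :
    Set.ncard (F '' C ∩ {w : Fin 2 → ℂ | a * w 0 + b * w 1 + c = 0}) =
      d1 * (d1 + d2 - 2) := by
  have hPd : P.totalDegree ≤ d1 := by
    rw [hP]
    refine (totalDegree_add _ _).trans (max_le ((totalDegree_add _ _).trans (max_le ?_ ?_)) ?_)
    · rw [← smul_eq_C_mul]; exact (totalDegree_smul_le _ _).trans hf.le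
    · rw [← smul_eq_C_mul]; exact (totalDegree_smul_le _ _).trans (hg.le.trans hle)
    · rw [totalDegree_C]; exact Nat.zero_le _
  have himg : F '' C ∩ {w : Fin 2 → ℂ | a * w 0 + b * w 1 + c = 0} =
      F '' (C ∩ {q | eval q P = 0}) := by
    have hl : ∀ q, a * F q 0 + b * F q 1 + c = eval q P := by
      intro q; rw [hF, hP]; simp
    ext w
    constructor
    · rintro ⟨⟨q, hq, rfl⟩, hw⟩
      exact ⟨q, ⟨hq, by rw [Set.mem_setOf_eq, ← hl]; exact hw⟩, rfl⟩
    · rintro ⟨q, ⟨hq, hq2⟩, rfl⟩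
      exact ⟨⟨q, hq, rfl⟩, by rw [Set.mem_setOf_eq, hl]; exact hq2⟩
  have hset : C ∩ {q | eval q P = 0} = {q | eval q P = 0 ∧ eval q J = 0} := by
    rw [hC]; ext q; exact and_comm
  rw [himg, hinj.ncard_image, hset]
  have hdet : ∀ q, eval q P = 0 → eval q J = 0 →
      eval q (pderiv 0 P * pderiv 1 J - pderiv 1 P * pderiv 0 J) ≠ 0 := by
    intro q h1 h2 hd
    have h := LinearIndependent.pair_iff.1 (htrans q h1 h2)
    simp only [map_sub, map_mul] at hd
    have e0 := h (eval q (pderiv 0 J)) (-eval q (pderiv 0 P)) (by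
      ext i
      fin_cases i
      · simp; ring
      · simp; linear_combination -hd)
    have e1 := h (eval q (pderiv 1 J)) (-eval q (pderiv 1 P)) (by
      ext i
      fin_cases i
      · simp; linear_combination hd
      · simp; ring)
    have e2 := h 1 0 (by
      ext i
      fin_cases i
      · simpa using e0.2
      · simpa using e1.2)
    exact one_ne_zero e2.1
  have hPh := homogeneousComponent_isHomogeneous d1 P
  have hJh := homogeneousComponent_isHomogeneous (d1 + d2 - 2) J
  by_cases hn : d1 + d2 - 2 = 0
  · obtain ⟨v, hv, hv0⟩ := BZ.exists_zero (h21.trans hle) hPh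
    rw [hn] at hdegJ hinf
    rw [totalDegree_eq_zero_iff_eq_C] at hdegJ
    have hk : coeff 0 J ≠ 0 := by
      intro hk
      rw [hk, map_zero] at hdegJ
      exact hinf v hv ⟨hv0, by rw [hdegJ]; simp⟩
    have hempty : {q : Fin 2 → ℂ | eval q P = 0 ∧ eval q J = 0} = ∅ := by
      ext q
      simp only [Set.mem_setOf_eq, Set.mem_empty_iff_false, iff_false, not_and]
      intro _ h
      rw [hdegJ, eval_C] at h
      exact hk h
    rw [hempty, Set.ncard_empty, hn, mul_zero]
  · obtain ⟨v, hv, hv0⟩ := BZ.exists_zero (Nat.one_le_iff_ne_zero.2 hn) hJh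
    have hP0 : homogeneousComponent d1 P ≠ 0 := by
      intro h0
      exact hinf v hv ⟨by rw [h0]; simp, hv0⟩
    exact BZ.bezout P J hPd hdegJ.le hP0 hinf hdet
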